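/- If x ∈ O(m,n) and β : [p] → [m] is any monotone map, then xβ ∈ O(p,n). In other words, O(−,n) is a simplicial subset of ℤΔ(−,n), closed under all simplicial operators (not only the injective ones appearing in condition (O2)). -/

import Mathlib

/-!
Since `(xβ)β' = x(ββ')`, condition (O2) for `xβ` asks that `(x(ββ'))_γ ≥ 0` for injective `γ`.
If `ββ'` is injective, this is (O2) for `x`. Otherwise no composite `α ∘ (ββ')` is injective, so
none equals `γ` and the coefficient is `0`.
-/

abbrev ZD (a b : ℕ) := (Fin a →o Fin b) →₀ ℤ

noncomputable def act {a b c : ℕ} (x : ZD b c) (β : Fin a →o Fin b) : ZD a c :=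
  Finsupp.mapDomain (fun α => α.comp β) x

def face {m : ℕ} (i : Fin (m+1)) : Fin m →o Fin (m+1) :=
  ⟨i.succAbove, (Fin.succAboveOrderEmb i).monotone⟩

def degen {m : ℕ} (i : Fin m) : Fin (m+1) →o Fin m :=
  ⟨i.predAbove, Fin.predAbove_right_monotone i⟩

def memO {a b : ℕ} (x : ZD a b) : Prop :=
  (x.sum fun _ c => c) = 1 ∧
    ∀ (p : ℕ) (β : Fin (p+1) →o Fin a) (γ : Fin (p+1) →o Fin b),
      Function.Injective ⇑β → Function.Injective ⇑γ → 0 ≤ act x β γ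

/-- The witness operation `x ▽ₖ y`, for `x, y ∈ ℤΔ([m],[n])` and `1 ≤ k ≤ m`. -/
noncomputable def fill {m b : ℕ} (k : ℕ) (h1 : 1 ≤ k) (h2 : k ≤ m)
    (x y : ZD (m+1) b) : ZD (m+2) b :=
  act x (degen ⟨k, by omega⟩)
    - act (act (act x (face ⟨k-1, by omega⟩)) (degen ⟨k-1, by omega⟩)) (degen ⟨k-1, by omega⟩)
    + act y (degen ⟨k-1, by omega⟩)

/-- The pasting operation `x ⋆ₖ y`. -/
noncomputable def paste {m b : ℕ} (k : ℕ) (h1 : 1 ≤ k) (h2 : k ≤ m)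
    (x y : ZD (m+1) b) : ZD (m+1) b :=
  x - act (act x (face ⟨k-1, by omega⟩)) (degen ⟨k-1, by omega⟩) + y

/-- `x` is degenerate at `k`, i.e. `x = y σₖ` for some `y` one dimension lower. -/
def isDegenAt {a b : ℕ} (x : ZD a b) (k : ℕ) : Prop :=
  ∃ (p : ℕ) (hp : a = p + 1) (hk : k < p) (y : ZD p b),
    x = hp ▸ act y (degen ⟨k, hk⟩)

def isDegen {a b : ℕ} (x : ZD a b) : Prop := ∃ k, isDegenAt x k

/-- The number of preimages of the top element `n` under `α`. -/
def npre {a n : ℕ} (α : Fin a →o Fin (n+1)) : ℕ :=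
  (Finset.univ.filter fun i => α i = Fin.last n).card

/-- `x` lies in the simplicial subset `A`: all operators in the support of `x`
have equally many preimages of the top element. -/
def inA {a n : ℕ} (x : ZD a (n+1)) : Prop :=
  ∀ α ∈ x.support, ∀ β ∈ x.support, npre α = npre β

/-- `r` is the rank of `x`: the least `i` such that some `α ∈ supp x` has `α i = n`. -/
def isRank {a n : ℕ} (x : ZD a (n+1)) (r : Fin a) : Prop :=
  IsLeast {i : Fin a | ∃ α ∈ x.support, α i = Fin.last n} r

/-- `x̌`: the part of `x` supported on operators with `α r < n`. -/
noncomputable def checkPart {a n : ℕ} (x : ZD a (n+1)) (r : Fin a) : ZD a (n+1) :=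
  x.filter (fun α => ¬ (α r = Fin.last n))

/-- `x̄`: the part of `x` supported on operators with `α r = n`. -/
noncomputable def barPart {a n : ℕ} (x : ZD a (n+1)) (r : Fin a) : ZD a (n+1) :=
  x.filter (fun α => α r = Fin.last n)

/-- `ℓ` is the level of `x` (with rank `r`). -/
def isLevel {a n : ℕ} (x : ZD a (n+1)) (r ℓ : Fin a) : Prop :=
  IsLeast {i : Fin a | ∀ α ∈ (checkPart x r).support, α i = α r} ℓ

/-- Condition (†): `x̄` is degenerate at `ℓ - 1`. -/
def dagger {a n : ℕ} (x : ZD a (n+1)) (r ℓ : Fin a) : Prop :=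
  isDegenAt (barPart x r) ((ℓ : ℕ) - 1)

/-- The corank of `x`: the greatest number of preimages of `n` among operators in `supp x`. -/
def corank {a n : ℕ} (x : ZD a (n+1)) : ℕ := x.support.sup npre

/-- `u = x̌ + (x̄ ∂ℓ) σ(ℓ-1)`. -/
noncomputable def uPart {m n : ℕ} (x : ZD (m+1) (n+1)) (r ℓ : Fin (m+1))
    (h1 : 1 ≤ (ℓ : ℕ)) : ZD (m+1) (n+1) :=
  checkPart x r
    + act (act (barPart x r) (face ℓ)) (degen ⟨(ℓ:ℕ)-1, by have := ℓ.isLt; omega⟩)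

/-- `v = (x̌ ∂(ℓ-1)) σ(ℓ-1) + x̄`. -/
noncomputable def vPart {m n : ℕ} (x : ZD (m+1) (n+1)) (r ℓ : Fin (m+1))
    (h1 : 1 ≤ (ℓ : ℕ)) : ZD (m+1) (n+1) :=
  act (act (checkPart x r) (face ⟨(ℓ:ℕ)-1, by have := ℓ.isLt; omega⟩))
      (degen ⟨(ℓ:ℕ)-1, by have := ℓ.isLt; omega⟩)
    + barPart x r

/-- The parent `w = x̌ σℓ + x̄ σ(ℓ-1)`. -/
noncomputable def parent {m n : ℕ} (x : ZD (m+1) (n+1)) (r ℓ : Fin (m+1)) :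
    ZD (m+2) (n+1) :=
  act (checkPart x r) (degen ℓ)
    + act (barPart x r) (degen ⟨(ℓ:ℕ)-1, by have := ℓ.isLt; omega⟩)

/-- Bilinear extension of composition: `(x ∘ y)_γ = Σ_{α∘β = γ} x_α · y_β`. -/
noncomputable def zcomp {p m n : ℕ} (x : ZD m n) (y : ZD p m) : ZD p n :=
  x.sum fun α c => c • Finsupp.mapDomain (fun β => α.comp β) y

theorem act_act {a b c d : ℕ} (x : ZD c d) (β : Fin b →o Fin c) (β' : Fin a →o Fin b) :
    act (act x β) β' = act x (β.comp β') := by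
  unfold act
  rw [← Finsupp.mapDomain_comp]
  rfl

theorem act_apply_eq_zero {a b c : ℕ} (x : ZD b c) (β : Fin a →o Fin b) (γ : Fin a →o Fin c)
    (hβ : ¬ Function.Injective ⇑β) (hγ : Function.Injective ⇑γ) : act x β γ = 0 := by
  apply Finsupp.mapDomain_of_notMem_range
  rintro ⟨α, rfl⟩
  exact hβ (Function.Injective.of_comp (f := ⇑α) hγ)

/-- `O(−,n)` is closed under the action of all simplicial operators. -/
theorem stmt2 (m n p : ℕ) (x : ZD (m+1) (n+1)) (hx : memO x)
    (β : Fin (p+1) →o Fin (m+1)) : memO (act x β) := by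
  refine ⟨?_, fun q β' γ _ hγ => ?_⟩
  · unfold act
    rw [Finsupp.sum_mapDomain_index (fun _ => rfl) (fun _ _ _ => rfl)]
    exact hx.1
  · rw [act_act]
    by_cases h : Function.Injective ⇑(β.comp β')
    · exact hx.2 q _ γ h hγ
    · exact (act_apply_eq_zero x _ γ h hγ).ge
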